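/- For every even m ≥ 2 and n ≥ 2, the topological complexity of C_n(ℝ^m) equals either 2n − 2 or 2n − 1. -/

import Mathlib

/-- The space of continuous paths `[0,1] → X`, with the compact-open topology. -/
abbrev PathSpace (X : Type*) [TopologicalSpace X] := C(unitInterval, X)

/-- `U ⊆ X × X` admits a continuous section of the path fibration
`π : PX → X × X`, `π(γ) = (γ 0, γ 1)`. -/
def HasMotionPlanningSection (X : Type*) [TopologicalSpace X] (U : Set (X × X)) : Prop :=
  ∃ s : C(U, PathSpace X), ∀ p : U, s p 0 = (p : X × X).1 ∧ s p 1 = (p : X × X).2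

/-- `X × X` can be covered by `k` open sets, over each of which the path
fibration admits a continuous section. -/
def HasTCCover (X : Type*) [TopologicalSpace X] (k : ℕ) : Prop :=
  ∃ U : Fin k → Set (X × X), (∀ i, IsOpen (U i)) ∧ (⋃ i, U i) = Set.univ ∧
    ∀ i, HasMotionPlanningSection X (U i)

/-- The topological complexity of `X` (in the unnormalized convention of Farber,
so that `TopComplexity(point) = 1`), as an extended natural number. -/
noncomputable def TopComplexity (X : Type*) [TopologicalSpace X] : ℕ∞ :=
  sInf {N : ℕ∞ | ∃ k : ℕ, N = k ∧ HasTCCover X k}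

/-- The configuration space of `n` ordered distinct points in `ℝ^m`. -/
abbrev ConfSpace (n m : ℕ) := {f : Fin n → (Fin m → ℝ) // Function.Injective f}

section Brouwer

open MeasureTheory Metric

/-- The determinant of a small perturbation of the identity is positive. -/
theorem det_one_add_pos_of_norm_lt_one {V : Type*} [NormedAddCommGroup V] [NormedSpace ℝ V]
    [FiniteDimensional ℝ V] (A : V →L[ℝ] V) (hA : ‖A‖ < 1) : 0 < (1 + A).det := by
  have hcont : Continuous fun s : ℝ => (1 + s • A).det :=
    ContinuousLinearMap.continuous_det.comp (by fun_prop)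
  have hne : ∀ s ∈ Set.Icc (0 : ℝ) 1, (1 + s • A).det ≠ 0 := by
    intro s hs h0
    have hker := LinearMap.bot_lt_ker_of_det_eq_zero (f := ((1 + s • A : V →L[ℝ] V) : V →ₗ[ℝ] V)) h0
    obtain ⟨v, hv, hv0⟩ := (Submodule.ne_bot_iff _).1 hker.ne'
    have hv' : v = -(s • A v) := eq_neg_of_add_eq_zero_left (by simpa using hv)
    have h1 : ‖v‖ ≤ ‖A‖ * ‖v‖ := by
      calc ‖v‖ = s * ‖A v‖ := by
            conv_lhs => rw [hv', norm_neg, norm_smul, Real.norm_of_nonneg hs.1]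
        _ ≤ 1 * ‖A v‖ := by gcongr; exact hs.2
        _ ≤ ‖A‖ * ‖v‖ := by rw [one_mul]; exact A.le_opNorm v
    have : 0 < ‖v‖ := norm_pos_iff.2 hv0
    nlinarith
  by_contra hle
  push Not at hle
  have hmem : (0 : ℝ) ∈ Set.Icc ((1 + (1 : ℝ) • A).det) ((1 + (0 : ℝ) • A).det) := by
    refine ⟨by simpa using hle, ?_⟩
    have : (1 + (0 : ℝ) • A).det = 1 := by simp [ContinuousLinearMap.det]
    rw [this]; exact zero_le_one
  obtain ⟨s, hs, h0⟩ := intermediate_value_Icc' zero_le_one hcont.continuousOn hmem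
  exact hne s hs h0

/-- `t ↦ det (1 + t A)` is a polynomial of degree at most the dimension. -/
theorem exists_polynomial_det_one_add_smul {V : Type*} [NormedAddCommGroup V] [NormedSpace ℝ V]
    [FiniteDimensional ℝ V] (A : V →L[ℝ] V) :
    ∃ p : Polynomial ℝ, p.natDegree ≤ Module.finrank ℝ V ∧
      ∀ t : ℝ, (1 + t • A).det = p.eval t := by
  classical
  let b := Module.finBasis ℝ V
  let M := LinearMap.toMatrix b b (A : V →ₗ[ℝ] V)
  let p : Matrix (Fin (Module.finrank ℝ V)) (Fin (Module.finrank ℝ V)) (Polynomial ℝ) :=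
    (Polynomial.X : Polynomial ℝ) • M.map Polynomial.C + (1 : Matrix _ _ ℝ).map Polynomial.C
  refine ⟨p.det, ?_, ?_⟩
  · simpa [p] using Polynomial.natDegree_det_X_add_C_le M 1
  · intro t
    rw [← Polynomial.coe_evalRingHom, RingHom.map_det, ContinuousLinearMap.det,
      ← LinearMap.det_toMatrix b]
    congr 1
    ext i j
    simp [p, M, Matrix.map_apply, Matrix.one_apply, LinearMap.toMatrix_apply, Matrix.smul_apply,
      Module.Basis.repr_self, Finsupp.single_apply]
    rcases eq_or_ne i j with rfl | h
    · simp [mul_comm, add_comm]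
    · simp [h, h.symm, mul_comm]

/-- Change of variables for `id + t g`, when `g` is `K`-Lipschitz, `t K < 1` and `g` vanishes
off a ball. -/
theorem setIntegral_det_one_add_smul_eq {V : Type*} [NormedAddCommGroup V] [NormedSpace ℝ V]
    [FiniteDimensional ℝ V] [MeasurableSpace V] [BorelSpace V] (μ : Measure V) [μ.IsAddHaarMeasure]
    {g : V → V} {K : NNReal} {r t : ℝ} (hg : LipschitzWith K g)
    (hg0 : ∀ x, r ≤ ‖x‖ → g x = 0) (hd : ∀ x ∈ ball (0 : V) r, DifferentiableAt ℝ g x)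
    (ht : 0 ≤ t) (htK : t * K < 1) :
    ∫ x in ball (0 : V) r, (1 + t • fderiv ℝ g x).det ∂μ = μ.real (ball 0 r) := by
  set φ : V → V := fun x => x + t • g x with hφ
  have hinj : Function.Injective φ := by
    intro x y hxy
    have h1 : x - y = t • (g y - g x) := by
      simp only [hφ] at hxy
      rw [smul_sub, sub_eq_sub_iff_add_eq_add, hxy, add_comm]
    have h2 : ‖x - y‖ ≤ t * (K * ‖x - y‖) := by
      conv_lhs => rw [h1, norm_smul, Real.norm_of_nonneg ht]
      gcongr
      rw [norm_sub_rev x y]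
      simpa [dist_eq_norm] using hg.dist_le_mul y x
    by_contra hne
    have : 0 < ‖x - y‖ := norm_pos_iff.2 (sub_ne_zero.2 hne)
    nlinarith
  have hsurj : Function.Surjective φ := by
    intro y
    lift t to NNReal using ht
    have hc : ContractingWith (t * K) fun x => y - (t : ℝ) • g x := by
      refine ⟨by exact_mod_cast htK, ?_⟩
      refine LipschitzWith.of_dist_le_mul fun a b => ?_
      rw [dist_eq_norm, sub_sub_sub_cancel_left, ← smul_sub, norm_smul,
        Real.norm_of_nonneg t.coe_nonneg, NNReal.coe_mul, mul_assoc, ← dist_eq_norm, dist_comm]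
      exact mul_le_mul_of_nonneg_left (hg.dist_le_mul _ _) t.2
    refine ⟨hc.fixedPoint, ?_⟩
    have h := hc.fixedPoint_isFixedPt.eq
    simp only [hφ]
    nth_rewrite 1 [← h]
    simp
  have hout : ∀ x, r ≤ ‖x‖ → φ x = x := fun x hx => by simp [hφ, hg0 x hx]
  have himage : φ '' ball 0 r = ball 0 r := by
    apply Set.Subset.antisymm
    · rintro _ ⟨x, hx, rfl⟩
      by_contra hn
      have hn' : r ≤ ‖φ x‖ := by simpa using hn
      have := hinj (hout _ hn')
      rw [this] at hn
      exact hn hx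
    · intro y hy
      obtain ⟨x, rfl⟩ := hsurj y
      refine ⟨x, ?_, rfl⟩
      by_contra hn
      rw [hout x (by simpa using hn)] at hy
      exact hn hy
  have hderiv : ∀ x ∈ ball (0 : V) r,
      HasFDerivWithinAt φ (1 + t • fderiv ℝ g x) (ball 0 r) x := fun x hx =>
    ((hasFDerivAt_id x).add ((hd x hx).hasFDerivAt.const_smul t)).hasFDerivWithinAt
  have hcv := integral_image_eq_integral_abs_det_fderiv_smul μ measurableSet_ball hderiv
    hinj.injOn (fun _ => (1 : ℝ))
  rw [himage] at hcv
  simp only [smul_eq_mul, mul_one, integral_const, measureReal_restrict_apply_univ] at hcv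
  rw [hcv]
  refine setIntegral_congr_fun measurableSet_ball fun x _ => ?_
  refine (abs_of_pos (det_one_add_pos_of_norm_lt_one _ ?_)).symm
  rw [norm_smul, Real.norm_of_nonneg ht]
  exact (mul_le_mul_of_nonneg_left (norm_fderiv_le_of_lipschitz ℝ hg) ht).trans_lt htK

theorem setIntegral_det_one_add_eq {V : Type*} [NormedAddCommGroup V] [NormedSpace ℝ V]
    [FiniteDimensional ℝ V] [MeasurableSpace V] [BorelSpace V] (μ : Measure V) [μ.IsAddHaarMeasure]
    {g : V → V} {K : NNReal} {r : ℝ} (hg : LipschitzWith K g)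
    (hg0 : ∀ x, r ≤ ‖x‖ → g x = 0) (hd : ∀ x ∈ ball (0 : V) r, DifferentiableAt ℝ g x) :
    ∫ x in ball (0 : V) r, (1 + fderiv ℝ g x).det ∂μ = μ.real (ball 0 r) := by
  classical
  set N := Module.finrank ℝ V
  let s := Finset.range (N + 1)
  let v : ℕ → ℝ := fun i => 1 / ((K + 1) * (i + 1))
  have hv : Set.InjOn v s := by
    intro i _ j _ hij
    have hK : (0 : ℝ) < K + 1 := by positivity
    simp only [v, one_div, inv_inj] at hij
    exact_mod_cast add_right_cancel (mul_left_cancel₀ hK.ne' hij)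
  have hv0 : ∀ i, 0 ≤ v i := fun i => by positivity
  have hvK : ∀ i, v i * K < 1 := fun i => by
    simp only [v]
    rw [div_mul_eq_mul_div, one_mul, div_lt_one (by positivity)]
    have : (0 : ℝ) ≤ K := K.2
    nlinarith [(Nat.cast_nonneg i : (0 : ℝ) ≤ i)]
  have hinterp : ∀ p : Polynomial ℝ, p.natDegree ≤ N →
      p.eval 1 = ∑ i ∈ s, p.eval (v i) * (Lagrange.basis s v i).eval 1 := by
    intro p hp
    have hdeg : p.degree < s.card := by
      refine Polynomial.degree_le_natDegree.trans_lt ?_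
      simp only [s, Finset.card_range]
      exact_mod_cast Nat.lt_succ_of_le hp
    conv_lhs => rw [Lagrange.eq_interpolate hv hdeg, Lagrange.interpolate_apply]
    simp [Polynomial.eval_finsetSum]
  have hpt : ∀ A : V →L[ℝ] V,
      (1 + A).det = ∑ i ∈ s, (1 + v i • A).det * (Lagrange.basis s v i).eval 1 := by
    intro A
    obtain ⟨p, hp, hpe⟩ := exists_polynomial_det_one_add_smul A
    simp only [hpe]
    rw [← hinterp p hp, ← hpe, one_smul]
  have hint : ∀ i ∈ s, Integrable (fun x => (1 + v i • fderiv ℝ g x).det)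
      (μ.restrict (ball 0 r)) := by
    intro i _
    have hmeas : Measurable fun x => (1 + v i • fderiv ℝ g x).det :=
      ContinuousLinearMap.continuous_det.measurable.comp
        (((measurable_fderiv ℝ g).const_smul (v i)).const_add 1)
    obtain ⟨C, hC⟩ := ((isCompact_closedBall (0 : V →L[ℝ] V) K).image
      (f := fun A => (1 + v i • A).det)
      (ContinuousLinearMap.continuous_det.comp (by fun_prop))).isBounded.exists_norm_le
    have : IsFiniteMeasure (μ.restrict (ball (0 : V) r)) :=
      ⟨by simpa using measure_ball_lt_top⟩
    refine Integrable.of_bound (C := C) hmeas.aestronglyMeasurable (Filter.Eventually.of_forall ?_)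
    intro x
    exact hC _ ⟨fderiv ℝ g x, by simpa using norm_fderiv_le_of_lipschitz ℝ hg, rfl⟩
  have hsum : ∑ i ∈ s, (Lagrange.basis s v i).eval 1 = 1 := by
    simpa using (hinterp 1 (by simp)).symm
  rw [funext fun x => hpt (fderiv ℝ g x)]
  rw [integral_finsetSum _ fun i hi => (hint i hi).mul_const _]
  simp_rw [integral_mul_const]
  rw [Finset.sum_congr rfl fun i _ => by
    rw [setIntegral_det_one_add_smul_eq μ hg hg0 hd (hv0 i) (hvK i)], ← Finset.mul_sum, hsum,
    mul_one]

/-- A continuously differentiable map that is the identity off a ball has a zero. -/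
theorem exists_eq_zero_of_contDiff_of_eq_id {V : Type*} [NormedAddCommGroup V]
    [InnerProductSpace ℝ V] [FiniteDimensional ℝ V] {f : V → V} (hf : ContDiff ℝ 1 f) {r : ℝ}
    (hr : 0 < r) (hid : ∀ x, r ≤ ‖x‖ → f x = x) : ∃ x, f x = 0 := by
  by_contra! hne
  borelize V
  set u : V → V := fun x => (r * ‖f x‖⁻¹) • f x with hu
  have hucd : ContDiff ℝ 1 u :=
    (contDiff_const.mul ((hf.norm ℝ hne).inv fun x => norm_ne_zero_iff.2 (hne x))).smul hf
  have hunorm : ∀ x, ‖u x‖ = r := fun x => by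
    have := norm_ne_zero_iff.2 (hne x)
    simp only [hu, norm_smul, norm_mul, norm_inv, norm_norm, Real.norm_of_nonneg hr.le]
    field_simp
  have husphere : ∀ x, ‖x‖ = r → u x = x := fun x hx => by
    simp only [hu, hid x hx.ge, hx]
    rw [mul_inv_cancel₀ hr.ne', one_smul]
  set k : V → V := fun x => u x - x with hk
  have hkcd : ContDiff ℝ 1 k := hucd.sub contDiff_id
  set g : V → V := fun x => if ‖x‖ ≤ r then k x else 0 with hg
  obtain ⟨C, hC⟩ := ((isCompact_closedBall (0 : V) r).image_of_continuousOn
    (hkcd.continuous_fderiv one_ne_zero).continuousOn).isBounded.exists_norm_le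
  have hkl : LipschitzOnWith C.toNNReal k (closedBall 0 r) := by
    refine (convex_closedBall (0 : V) r).lipschitzOnWith_of_nnnorm_fderiv_le (𝕜 := ℝ)
      (fun x _ => hkcd.differentiable one_ne_zero x) fun x hx => ?_
    rw [← NNReal.coe_le_coe, coe_nnnorm]
    exact (hC _ ⟨x, hx, rfl⟩).trans (Real.le_coe_toNNReal C)
  have hgl : LipschitzWith C.toNNReal g := by
    have hio : ∀ x y, ‖x‖ ≤ r → r < ‖y‖ → ‖g x - g y‖ ≤ C.toNNReal * ‖x - y‖ := by
      intro x y hx hy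
      have hcont : Continuous fun s : ℝ => ‖x + s • (y - x)‖ := by fun_prop
      obtain ⟨s, hs, hsr⟩ := intermediate_value_Icc zero_le_one hcont.continuousOn
        (show r ∈ Set.Icc ‖x + (0 : ℝ) • (y - x)‖ ‖x + (1 : ℝ) • (y - x)‖ by
          simpa using ⟨hx, hy.le⟩)
      set w := x + s • (y - x) with hw
      have hkw : k w = 0 := by simp [hk, husphere w hsr]
      have h1 : ‖k x - k w‖ ≤ C.toNNReal * ‖x - w‖ := by
        simpa [dist_eq_norm] using hkl.dist_le_mul x (by simpa using hx) w (by simpa using hsr.le)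
      have h2 : ‖x - w‖ ≤ ‖x - y‖ := by
        have : x - w = s • (x - y) := by rw [hw, ← neg_sub y x, smul_neg]; abel
        rw [this, norm_smul, Real.norm_of_nonneg hs.1]
        exact mul_le_of_le_one_left (norm_nonneg _) hs.2
      simp only [hg, if_pos hx, if_neg (not_le.2 hy)]
      rw [hkw] at h1
      exact h1.trans (by gcongr)
    refine LipschitzWith.of_dist_le_mul fun x y => ?_
    rw [dist_eq_norm, dist_eq_norm]
    rcases le_or_gt ‖x‖ r with hx | hx <;> rcases le_or_gt ‖y‖ r with hy | hy
    · simp only [hg, if_pos hx, if_pos hy]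
      simpa [dist_eq_norm] using hkl.dist_le_mul x (by simpa using hx) y (by simpa using hy)
    · exact hio x y hx hy
    · rw [norm_sub_rev, norm_sub_rev x]
      exact hio y x hy hx
    · simp only [hg, if_neg (not_le.2 hx), if_neg (not_le.2 hy), sub_self, norm_zero]
      positivity
  have hgk : ∀ x ∈ ball (0 : V) r, g =ᶠ[nhds x] k := fun x hx => by
    filter_upwards [isOpen_ball.mem_nhds hx] with y hy
    simp only [hg]
    rw [if_pos (by simpa using (mem_ball_zero_iff.1 hy).le)]
  have hint := setIntegral_det_one_add_eq (volume : Measure V) (r := r) hgl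
    (fun x hx => by
      rcases hx.eq_or_lt with h | h
      · simp [hg, hk, husphere x h.symm]
      · simp only [hg, if_neg (not_le.2 h)])
    (fun x hx => ((hkcd.differentiable one_ne_zero x).congr_of_eventuallyEq (hgk x hx)))
  have hdet : ∀ x ∈ ball (0 : V) r, (1 + fderiv ℝ g x).det = 0 := by
    intro x hx
    have hd : 1 + fderiv ℝ g x = fderiv ℝ u x := by
      rw [(hgk x hx).fderiv_eq, hk, fderiv_fun_sub (hucd.differentiable one_ne_zero x)
        differentiableAt_fun_id, fderiv_fun_id]
      simp [ContinuousLinearMap.one_def]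
    rw [hd]
    by_contra h0
    let e := LinearMap.equivOfDetNeZero ((fderiv ℝ u x : V →L[ℝ] V) : V →ₗ[ℝ] V) h0
    have hux := (hucd.differentiable one_ne_zero x).hasFDerivAt
    have hconst : HasFDerivAt (fun y => inner ℝ (u y) (u y)) (0 : V →L[ℝ] ℝ) x := by
      simp only [real_inner_self_eq_norm_sq, hunorm]
      exact hasFDerivAt_const _ _
    have huniq := (hux.inner ℝ hux).unique hconst
    have hv : fderiv ℝ u x (e.symm (u x)) = u x := e.apply_symm_apply (u x)
    have h2 := DFunLike.congr_fun huniq (e.symm (u x))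
    simp [fderivInnerCLM_apply, hv, hunorm] at h2
    exact hr.ne' h2
  rw [setIntegral_congr_fun measurableSet_ball hdet, integral_zero] at hint
  have : 0 < (volume : Measure V).real (ball 0 r) :=
    ENNReal.toReal_pos (measure_ball_pos _ _ hr).ne' measure_ball_lt_top.ne
  exact this.ne hint

theorem exists_fixedPoint_of_bounded_aux {V : Type*} [NormedAddCommGroup V]
    [InnerProductSpace ℝ V] [FiniteDimensional ℝ V] {Φ : V → V} (hΦ : Continuous Φ) {M : ℝ}
    (hM : ∀ x, ‖Φ x‖ ≤ M) : ∃ x, Φ x = x := by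
  by_contra! hne
  have hM0 : 0 ≤ M := (norm_nonneg _).trans (hM 0)
  let χ : ContDiffBump (0 : V) := ⟨M + 2, M + 3, by linarith, by linarith⟩
  obtain ⟨x₀, -, hx₀⟩ := (isCompact_closedBall (0 : V) (M + 2)).exists_isMinOn
    ⟨0, by simp; linarith⟩ (f := fun x => ‖Φ x - x‖) (by fun_prop)
  set δ := min 1 ‖Φ x₀ - x₀‖
  have hδ : 0 < δ := lt_min one_pos (norm_pos_iff.2 (sub_ne_zero.2 (hne x₀)))
  have huc : UniformContinuous fun x => χ x • Φ x :=
    χ.hasCompactSupport.smul_right.uniformContinuous_of_continuous (χ.continuous.smul hΦ)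
  obtain ⟨Ψ, hΨ, hΨΦ⟩ := huc.exists_contDiff_dist_le hδ
  obtain ⟨x, hx⟩ := exists_eq_zero_of_contDiff_of_eq_id (f := fun x => x - χ x • Ψ x)
    (r := M + 3) (contDiff_id.sub (χ.contDiff.smul (hΨ.of_le (by exact_mod_cast le_top))))
    (by linarith) (fun x hx => by simp [χ.zero_of_le_dist (x := x) (by simpa [χ] using hx)])
  have hΨM : ‖χ x • Ψ x‖ ≤ M + 1 := by
    have h1 : ‖χ x • Φ x‖ ≤ M := by
      rw [norm_smul, Real.norm_of_nonneg χ.nonneg]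
      exact (mul_le_of_le_one_left (norm_nonneg _) χ.le_one).trans (hM x)
    have h2 := (hΨΦ x).le.trans (min_le_left _ _)
    rw [dist_eq_norm] at h2
    rw [norm_smul, Real.norm_of_nonneg χ.nonneg]
    refine (mul_le_of_le_one_left (norm_nonneg _) χ.le_one).trans ?_
    calc ‖Ψ x‖ = ‖χ x • Φ x + (Ψ x - χ x • Φ x)‖ := by rw [add_sub_cancel]
      _ ≤ M + 1 := (norm_add_le _ _).trans (add_le_add h1 h2)
  have hxΨ : x = χ x • Ψ x := sub_eq_zero.1 hx
  have hxball : x ∈ closedBall (0 : V) (M + 2) := by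
    rw [mem_closedBall_zero_iff, hxΨ]; linarith
  have hχ : χ x = 1 := χ.one_of_mem_closedBall hxball
  have h3 := hΨΦ x
  rw [hχ, one_smul] at hxΨ h3
  rw [← hxΨ, dist_comm, dist_eq_norm] at h3
  exact absurd (h3.trans_le (min_le_right _ _)) (not_lt.2 (hx₀ hxball))

/-- **Brouwer's fixed point theorem**, for bounded maps of a finite-dimensional normed space. -/
theorem exists_fixedPoint_of_bounded {W : Type*} [NormedAddCommGroup W] [NormedSpace ℝ W]
    [FiniteDimensional ℝ W] {Φ : W → W} (hΦ : Continuous Φ) {M : ℝ}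
    (hM : ∀ x, ‖Φ x‖ ≤ M) : ∃ x, Φ x = x := by
  let e : W ≃L[ℝ] EuclideanSpace ℝ (Fin (Module.finrank ℝ W)) :=
    ContinuousLinearEquiv.ofFinrankEq (by simp)
  obtain ⟨y, hy⟩ := exists_fixedPoint_of_bounded_aux (Φ := fun y => e (Φ (e.symm y)))
    (by fun_prop) (M := ‖(e : W →L[ℝ] EuclideanSpace ℝ (Fin (Module.finrank ℝ W)))‖ * M)
    (fun y => ((e : W →L[ℝ] EuclideanSpace ℝ (Fin (Module.finrank ℝ W))).le_opNorm _).trans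
      (by gcongr; exact hM _))
  exact ⟨e.symm y, e.injective (by rw [hy, e.apply_symm_apply])⟩

end Brouwer

section LowerBound

/-- A map defined on an open set can be extended by a map it agrees with off a closed set. -/
theorem continuous_ite_mem_of_isClosed {Z E : Type*} [TopologicalSpace Z] [TopologicalSpace E]
    {O B : Set Z} [DecidablePred (· ∈ B)] (hO : IsOpen O) (hB : IsClosed B) (hBO : B ⊆ O)
    {w w₀ : Z → E} (hw₀ : Continuous w₀) (hw : ContinuousOn w O)
    (h : ∀ z ∈ O, z ∉ B → w z = w₀ z) : Continuous fun z => if z ∈ B then w z else w₀ z := by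
  rw [continuous_iff_continuousAt]
  intro z
  by_cases hz : z ∈ B
  · refine (hw.continuousAt (hO.mem_nhds (hBO hz))).congr ?_
    filter_upwards [hO.mem_nhds (hBO hz)] with y hy
    split_ifs with hyB
    · rfl
    · exact h y hy hyB
  · refine hw₀.continuousAt.congr ?_
    filter_upwards [hB.isOpen_compl.mem_nhds hz] with y hy
    rw [if_neg hy]

/-- Let `p` be a map from tuples of nonzero vectors to a space covered by open sets `U j`, and let
`h j` be a deformation, through nonzero vectors and over `U j`, which starts at the direction of
the `j`-th vector. Then the deformations cannot all end outside a suitable prescribed direction. -/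
theorem exists_deformation_end_eq_target {J E P : Type*} [Fintype J] [NormedAddCommGroup E]
    [NormedSpace ℝ E] [FiniteDimensional ℝ E] [TopologicalSpace P] [NormalSpace P]
    {p : (J → E) → P} (hp : ContinuousOn p {z | ∀ j, z j ≠ 0})
    {U : J → Set P} (hU : ∀ j, IsOpen (U j)) (hcov : ⋃ j, U j = Set.univ)
    {h : J → P × ℝ → E} (hcont : ∀ j, ContinuousOn (h j) (U j ×ˢ Set.univ))
    (hne : ∀ j, ∀ q ∈ U j, ∀ t, h j (q, t) ≠ 0)
    (hstart : ∀ j z, (∀ i, z i ≠ 0) → p z ∈ U j → ∃ c : ℝ, 0 < c ∧ h j (p z, 0) = c • z j)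
    {τ : (J → E) → J → E} (hτ : Continuous τ) (hτ1 : ∀ z j, ‖τ z j‖ ≤ 1)
    (hτnorm : ∀ z, (∀ j, ‖τ z j‖ = ‖z j‖) → ∀ j, ‖z j‖ = 1) :
    ∃ z, (∀ j, ‖z j‖ = 1) ∧ ∃ j, p z ∈ U j ∧ ∃ c : ℝ, 0 < c ∧ h j (p z, 1) = c • τ z j := by
  classical
  obtain ⟨V, hVcov, hVo, hVU⟩ :=
    exists_iUnion_eq_closure_subset hU (fun _ => Set.toFinite _) hcov
  obtain ⟨W, hWcov, hWo, hWV⟩ :=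
    exists_iUnion_eq_closure_subset hVo (fun _ => Set.toFinite _) hVcov
  have hl : ∀ j, ∃ l : C(P, ℝ), Set.EqOn l 0 (V j)ᶜ ∧ Set.EqOn l 1 (closure (W j)) := fun j => by
    obtain ⟨l, h0, h1, -⟩ := exists_continuous_zero_one_of_isClosed (hVo j).isClosed_compl
      isClosed_closure (Set.disjoint_compl_left_iff_subset.2 (hWV j))
    exact ⟨l, h0, h1⟩
  choose l hl0 hl1 using hl
  set G : Set (J → E) := {z | ∀ j, z j ≠ 0} with hG
  have hGo : IsOpen G := by
    rw [hG, Set.ofPred_forall]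
    exact isOpen_iInter_of_finite fun j => isOpen_ne.preimage (continuous_apply j)
  set A : Set (J → E) := {z | ∀ j, 1 / 2 ≤ ‖z j‖} with hA
  have hAc : IsClosed A := by
    rw [hA, Set.ofPred_forall]
    exact isClosed_iInter fun j => isClosed_le continuous_const (continuous_apply j).norm
  have hAG : A ⊆ G := fun z hz j => norm_pos_iff.1 (lt_of_lt_of_le (by norm_num) (hz j))
  set χ : (J → E) → ℝ := fun z => max 0 (1 - 2 * ‖fun j => ‖z j‖ - 1‖) with hχ
  have hχc : Continuous χ := by fun_prop
  have hχ0 : ∀ z, χ z ≠ 0 → ∀ j, |‖z j‖ - 1| < 1 / 2 := by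
    intro z hz j
    have h1 : 0 < 1 - 2 * ‖fun j => ‖z j‖ - 1‖ := by
      by_contra hle
      exact hz (max_eq_left (not_lt.1 hle))
    have h2 := norm_le_pi_norm (fun j => ‖z j‖ - 1) j
    rw [Real.norm_eq_abs] at h2
    linarith
  have hχA : ∀ z, z ∉ A → χ z = 0 := by
    intro z hz
    by_contra h0
    exact hz fun j => by linarith [(abs_lt.1 (hχ0 z h0 j)).1]
  set B : J → Set (J → E) := fun j => A ∩ p ⁻¹' closure (V j)
  have hB : ∀ j, IsClosed (B j) := fun j =>
    (hp.mono hAG).preimage_isClosed_of_isClosed hAc isClosed_closure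
  set O : J → Set (J → E) := fun j => G ∩ p ⁻¹' U j
  have hO : ∀ j, IsOpen (O j) := fun j => hp.isOpen_inter_preimage hGo (hU j)
  have hBO : ∀ j, B j ⊆ O j := fun j z hz => ⟨hAG hz.1, hVU j hz.2⟩
  set v : J → (J → E) → E := fun j z => h j (p z, χ z * l j (p z)) with hv
  set u : J → (J → E) → E := fun j z => (‖z j‖ / ‖v j z‖) • v j z with hu
  have hv0 : ∀ j, ∀ z ∈ O j, v j z ≠ 0 := fun j z hz => hne j _ hz.2 _
  have hvc : ∀ j, ContinuousOn (v j) (O j) := by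
    intro j
    have hpO : ContinuousOn p (O j) := hp.mono Set.inter_subset_left
    refine (hcont j).comp (hpO.prodMk (hχc.continuousOn.mul ((l j).continuous.comp_continuousOn
      hpO))) fun z hz => ⟨hz.2, Set.mem_univ _⟩
  have huc : ∀ j, ContinuousOn (u j) (O j) := fun j =>
    ((continuous_apply j).norm.continuousOn.div (hvc j).norm
      fun z hz => norm_ne_zero_iff.2 (hv0 j z hz)).smul (hvc j)
  have hu0 : ∀ j, ∀ z ∈ O j, χ z * l j (p z) = 0 → u j z = z j := by
    intro j z hz h0
    obtain ⟨c, hc, hcz⟩ := hstart j z hz.1 hz.2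
    have hzj := norm_ne_zero_iff.2 (hz.1 j)
    simp only [hu, hv, h0, hcz, norm_smul, Real.norm_of_nonneg hc.le, smul_smul]
    rw [div_mul_eq_mul_div, mul_comm c, div_self (mul_ne_zero hzj hc.ne'), one_smul]
  have hunorm : ∀ j, ∀ z ∈ O j, ‖u j z‖ = ‖z j‖ := by
    intro j z hz
    rw [norm_smul, norm_div, norm_norm, norm_norm,
      div_mul_cancel₀ _ (norm_ne_zero_iff.2 (hv0 j z hz))]
  set w : J → (J → E) → E := fun j z => if z ∈ B j then u j z else z j with hw
  have hwc : ∀ j, Continuous (w j) := by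
    intro j
    refine continuous_ite_mem_of_isClosed (hO j) (hB j) (hBO j) (continuous_apply j) (huc j) ?_
    intro z hz hzB
    refine hu0 j z hz ?_
    by_cases hzA : z ∈ A
    · have : p z ∈ (V j)ᶜ := fun hzV => hzB ⟨hzA, subset_closure hzV⟩
      rw [hl0 j this, Pi.zero_apply, mul_zero]
    · rw [hχA z hzA, zero_mul]
  have hwnorm : ∀ j z, ‖w j z‖ = ‖z j‖ := by
    intro j z
    simp only [hw]
    split_ifs with hz
    · exact hunorm j z (hBO j hz)
    · rfl
  have hwb : ∀ j z, ‖z j - w j z‖ ≤ 3 := by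
    intro j z
    by_cases hz : z ∈ B j
    · by_cases h0 : χ z = 0
      · simp only [hw, if_pos hz]
        rw [hu0 j z (hBO j hz) (by rw [h0, zero_mul])]
        simp
      · have := (abs_lt.1 (hχ0 z h0 j)).2
        refine (norm_sub_le _ _).trans ?_
        rw [hwnorm]
        linarith
    · simp [hw, if_neg hz]
  obtain ⟨z, hz⟩ := exists_fixedPoint_of_bounded (Φ := fun z j => z j - w j z + τ z j) (M := 4)
    (by fun_prop) fun z => by
      refine (pi_norm_le_iff_of_nonneg (by norm_num)).2 fun j => (norm_add_le _ _).trans ?_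
      linarith [hwb j z, hτ1 z j]
  have hwτ : ∀ j, w j z = τ z j := fun j => by
    have : z j - w j z + τ z j = z j := congrFun hz j
    rw [sub_add, sub_eq_self, sub_eq_zero] at this
    exact this
  have hz1 := hτnorm z fun j => by rw [← hwτ, hwnorm]
  obtain ⟨j, hj⟩ := Set.mem_iUnion.1 (hWcov.symm ▸ Set.mem_univ (p z))
  have hzB : z ∈ B j :=
    ⟨fun i => by rw [hz1 i]; norm_num, subset_closure (hWV j (subset_closure hj))⟩
  refine ⟨z, hz1, j, (hBO j hzB).2, ‖v j z‖, norm_pos_iff.2 (hv0 j z (hBO j hzB)), ?_⟩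
  have hχ1 : χ z = 1 := by
    have : (fun j => ‖z j‖ - 1) = 0 := funext fun j => by simp [hz1 j]
    simp only [hχ, this]
    simp
  have hv1 : h j (p z, 1) = v j z := by
    simp only [hv]
    rw [hχ1, hl1 j (subset_closure hj), Pi.one_apply, mul_one]
  rw [← hwτ, hv1]
  simp only [hw, if_pos hzB, hu, hz1, smul_smul]
  rw [mul_one_div, div_self (norm_ne_zero_iff.2 (hv0 j z (hBO j hzB))), one_smul]

theorem norm_inv_natCast_smul_inv_norm_smul {E : Type*} [NormedAddCommGroup E] [NormedSpace ℝ E]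
    {v : E} (hv : v ≠ 0) (i : ℕ) : ‖(i : ℝ)⁻¹ • ‖v‖⁻¹ • v‖ = (i : ℝ)⁻¹ := by
  rw [norm_smul, norm_smul, norm_inv, norm_inv, norm_norm,
    inv_mul_cancel₀ (norm_ne_zero_iff.2 hv), mul_one, Real.norm_natCast]

theorem injective_inv_fin_val (n : ℕ) : Function.Injective fun i : Fin n => ((i : ℕ) : ℝ)⁻¹ :=
  inv_injective.comp (Nat.cast_injective.comp Fin.val_injective)

/-- The configuration with one point at the origin and the others on spheres around it. -/
noncomputable def orbitAroundFirst {k : ℕ} {E : Type*} [NormedAddCommGroup E] [NormedSpace ℝ E]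
    (a : Fin (k + 1) → E) : Fin (k + 2) → E :=
  Fin.cons 0 fun i => ((i.succ : ℕ) : ℝ)⁻¹ • ‖a i‖⁻¹ • a i

/-- The configuration with a point at `0`, a point at `c` and the others on spheres around `c`. -/
noncomputable def orbitAroundSecond {k : ℕ} {E : Type*} [NormedAddCommGroup E] [NormedSpace ℝ E]
    (c : E) (b : Fin k → E) : Fin (k + 2) → E :=
  Fin.cons 0 (Fin.cons c fun i => c + ((i.succ.succ : ℕ) : ℝ)⁻¹ • ‖b i‖⁻¹ • b i)

theorem orbitAroundFirst_one {k : ℕ} {E : Type*} [NormedAddCommGroup E] [NormedSpace ℝ E]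
    (a : Fin (k + 1) → E) : orbitAroundFirst a 1 = ‖a 0‖⁻¹ • a 0 := by
  change ((((0 : Fin (k + 1)).succ : ℕ) : ℝ)⁻¹ • ‖a 0‖⁻¹ • a 0) = _
  simp

theorem orbitAroundFirst_injective {k : ℕ} {E : Type*} [NormedAddCommGroup E] [NormedSpace ℝ E]
    {a : Fin (k + 1) → E} (ha : ∀ i, a i ≠ 0) : Function.Injective (orbitAroundFirst a) := by
  refine Function.Injective.of_comp (f := fun v : E => ‖v‖) ?_
  convert injective_inv_fin_val (k + 2) using 1
  funext j
  refine Fin.cases ?_ (fun i => ?_) j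
  · simp [orbitAroundFirst]
  · simpa [orbitAroundFirst] using norm_inv_natCast_smul_inv_norm_smul (ha i) (i + 1)

theorem orbitAroundSecond_injective {k : ℕ} {E : Type*} [NormedAddCommGroup E] [NormedSpace ℝ E]
    {c : E} (hc : ‖c‖ = 1) {b : Fin k → E} (hb : ∀ i, b i ≠ 0) :
    Function.Injective (orbitAroundSecond c b) := by
  refine Function.Injective.of_comp (f := fun v : E => ‖v - c‖) ?_
  convert (injective_inv_fin_val (k + 2)).comp (Equiv.swap (0 : Fin (k + 2)) 1).injective using 1
  funext j
  refine Fin.cases ?_ (fun i => Fin.cases ?_ (fun i => ?_) i) j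
  · simp [orbitAroundSecond, hc]
  · simp [orbitAroundSecond]
  · have h1 : i.succ.succ ≠ 1 := fun h => by simp [Fin.ext_iff] at h
    rw [Function.comp_apply, Function.comp_apply,
      Equiv.swap_apply_of_ne_of_ne (Fin.succ_ne_zero _) h1]
    simpa [orbitAroundSecond] using norm_inv_natCast_smul_inv_norm_smul (hb i) (i + 1 + 1)

/-- A vector of norm one is not an opposite of a small perturbation of itself. -/
theorem add_inv_natCast_smul_ne_neg_smul {E : Type*} [NormedAddCommGroup E] [NormedSpace ℝ E]
    {c b : E} (hc : ‖c‖ = 1) (hb : ‖b‖ = 1) (i : ℕ) {r : ℝ} (hr : 0 < r) :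
    c + ((i + 2 : ℕ) : ℝ)⁻¹ • b ≠ -(r • c) := by
  intro h
  have h1 : ((i + 2 : ℕ) : ℝ)⁻¹ • b = -((1 + r) • c) := by
    rw [add_smul, one_smul, neg_add, ← h]; abel
  have h2 := congrArg norm h1
  rw [norm_neg, norm_smul, norm_smul, hc, hb, mul_one, mul_one, norm_inv, Real.norm_natCast,
    Real.norm_of_nonneg (by positivity)] at h2
  have h3 : ((i + 2 : ℕ) : ℝ)⁻¹ < 1 := inv_lt_one_of_one_lt₀ (by push_cast; linarith [
    (Nat.cast_nonneg i : (0 : ℝ) ≤ i)])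
  linarith

theorem not_hasTCCover_confSpace {k m : ℕ} (hm : 0 < m) :
    ¬ HasTCCover (ConfSpace (k + 2) m) (2 * k + 1) := by
  classical
  rintro ⟨U', hU'o, hU'c, hU's⟩
  choose s' hs' using hU's
  let e : Fin (k + 1) ⊕ Fin k ≃ Fin (2 * k + 1) :=
    finSumFinEquiv.trans (finCongr (by omega))
  set J := Fin (k + 1) ⊕ Fin k
  set E := Fin m → ℝ
  let c : E := fun _ => 1
  have : Nonempty (Fin m) := ⟨⟨0, hm⟩⟩
  have hc : ‖c‖ = 1 := (pi_norm_const (1 : ℝ)).trans norm_one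
  have hc0 : c ≠ 0 := norm_ne_zero_iff.1 (by rw [hc]; exact one_ne_zero)
  let X := ConfSpace (k + 2) m
  let U : J → Set (X × X) := fun j => U' (e j)
  let s : ∀ j, C(U j, PathSpace X) := fun j => s' (e j)
  have hs : ∀ j (q : U j), s j q 0 = q.1.1 ∧ s j q 1 = q.1.2 := fun j => hs' (e j)
  let x₀ : X := ⟨orbitAroundFirst fun _ => c, orbitAroundFirst_injective fun _ => hc0⟩
  let xf : (J → E) → Fin (k + 2) → E := fun z => orbitAroundFirst fun i => z (Sum.inl i)
  let yf : (J → E) → Fin (k + 2) → E := fun z => orbitAroundSecond c fun i => z (Sum.inr i)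
  let ext : (Fin (k + 2) → E) → X := fun f => if hf : Function.Injective f then ⟨f, hf⟩ else x₀
  have hext : ∀ f, Function.Injective f → (ext f).1 = f := fun f hf => by simp [ext, hf]
  have hxi : ∀ z : J → E, (∀ j, z j ≠ 0) → Function.Injective (xf z) := fun z hz =>
    orbitAroundFirst_injective fun _ => hz _
  have hyi : ∀ z : J → E, (∀ j, z j ≠ 0) → Function.Injective (yf z) := fun z hz =>
    orbitAroundSecond_injective hc fun _ => hz _
  let p : (J → E) → X × X := fun z => (ext (xf z), ext (yf z))
  have hunit : ∀ j, ContinuousOn (fun z : J → E => ‖z j‖⁻¹ • z j) {z | ∀ j, z j ≠ 0} := fun j =>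
    (ContinuousOn.inv₀ (f := fun z : J → E => ‖z j‖) (s := {z | ∀ j, z j ≠ 0})
      (continuous_apply j).norm.continuousOn
      fun _ hz => norm_ne_zero_iff.2 (hz j)).smul
      (continuous_apply j).continuousOn
  have hxc : ContinuousOn xf {z | ∀ j, z j ≠ 0} := by
    refine continuousOn_pi.2 fun j => ?_
    refine Fin.cases ?_ (fun i => ?_) j
    · exact continuousOn_const
    · exact (continuousOn_const (c := ((i.succ : ℕ) : ℝ)⁻¹)).smul (hunit (Sum.inl i))
  have hyc : ContinuousOn yf {z | ∀ j, z j ≠ 0} := by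
    refine continuousOn_pi.2 fun j => ?_
    refine Fin.cases ?_ (fun i => Fin.cases ?_ (fun i => ?_) i) j
    · exact continuousOn_const
    · exact continuousOn_const
    · exact continuousOn_const.add
        ((continuousOn_const (c := ((i.succ.succ : ℕ) : ℝ)⁻¹)).smul (hunit (Sum.inr i)))
  have hp : ContinuousOn p {z | ∀ j, z j ≠ 0} :=
    (Topology.IsInducing.subtypeVal.continuousOn_iff.2
      (hxc.congr fun z hz => hext _ (hxi z hz))).prodMk
    (Topology.IsInducing.subtypeVal.continuousOn_iff.2
      (hyc.congr fun z hz => hext _ (hyi z hz)))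
  let I : ℝ → unitInterval := Set.projIcc 0 1 zero_le_one
  let γ : ∀ j, U j → ℝ → Fin (k + 2) → E := fun j q t => (s j q (I t)).1
  have hγ : ∀ j, Continuous fun a : U j × ℝ => γ j a.1 a.2 := fun j =>
    continuous_subtype_val.comp
      (((s j).continuous.comp continuous_fst).eval (continuous_projIcc.comp continuous_snd))
  have hγ0 : ∀ j q, γ j q 0 = q.1.1.1 := fun j q => by
    simp only [γ, I, Set.projIcc_left]
    exact congrArg Subtype.val (hs j q).1
  have hγ1 : ∀ j q, γ j q 1 = q.1.2.1 := fun j q => by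
    simp only [γ, I, Set.projIcc_right]
    exact congrArg Subtype.val (hs j q).2
  let d : ∀ j, U j → ℝ → E := fun j => match j with
    | Sum.inl i => fun q t => γ (Sum.inl i) q t i.succ - γ (Sum.inl i) q t 0
    | Sum.inr i => fun q t => γ (Sum.inr i) q (1 - t) i.succ.succ - γ (Sum.inr i) q (1 - t) 1
  have hd : ∀ j, Continuous fun a : U j × ℝ => d j a.1 a.2 := by
    rintro (i | i)
    · exact ((continuous_apply _).comp (hγ _)).sub ((continuous_apply _).comp (hγ _))
    · have h1 := (hγ (Sum.inr i)).comp
        (continuous_fst.prodMk (continuous_const.sub continuous_snd) :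
          Continuous fun a : U (Sum.inr i) × ℝ => (a.1, 1 - a.2))
      exact ((continuous_apply _).comp h1).sub ((continuous_apply _).comp h1)
  have hd0 : ∀ j q t, d j q t ≠ 0 := by
    rintro (i | i) q t
    · exact sub_ne_zero.2 fun h => Fin.succ_ne_zero i ((s _ q (I t)).2 h)
    · exact sub_ne_zero.2 fun h =>
        Fin.succ_ne_zero i (Fin.succ_injective _ ((s _ q (I (1 - t))).2 h))
  let h : J → (X × X) × ℝ → E := fun j a => if ha : a.1 ∈ U j then d j ⟨a.1, ha⟩ a.2 else 0
  have hh : ∀ j q (hq : q ∈ U j) t, h j (q, t) = d j ⟨q, hq⟩ t := fun j q hq t => by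
    simp [h, hq]
  have hhc : ∀ j, ContinuousOn (h j) (U j ×ˢ Set.univ) := fun j => by
    rw [continuousOn_iff_continuous_domRestrict]
    have : Continuous fun a : (U j ×ˢ (Set.univ : Set ℝ) : Set ((X × X) × ℝ)) =>
        d j ⟨a.1.1, a.2.1⟩ a.1.2 :=
      (hd j).comp (((continuous_fst.comp continuous_subtype_val).subtype_mk _).prodMk
        (continuous_snd.comp continuous_subtype_val))
    refine this.congr fun a => ?_
    exact (hh j a.1.1 a.2.1 a.1.2).symm
  let τ : (J → E) → J → E := fun z j => match j with
    | Sum.inl _ => -c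
    | Sum.inr _ => (max 1 ‖z (Sum.inl 0)‖)⁻¹ • z (Sum.inl 0)
  have hpos : ∀ z : J → E, 0 < max 1 ‖z (Sum.inl 0)‖ := fun z =>
    lt_max_of_lt_left one_pos
  have hτc : Continuous τ := by
    refine continuous_pi ?_
    rintro (i | i)
    · exact continuous_const
    · exact ((continuous_const.max (continuous_apply _).norm).inv₀ fun z => (hpos z).ne').smul
        (continuous_apply _)
  have hτ1 : ∀ z j, ‖τ z j‖ ≤ 1 := by
    rintro z (i | i)
    · simp [τ, hc]
    · simp only [τ]
      rw [norm_smul, norm_inv, Real.norm_of_nonneg (hpos z).le, inv_mul_le_one₀ (hpos z)]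
      exact le_max_right _ _
  have hτn : ∀ z, (∀ j, ‖τ z j‖ = ‖z j‖) → ∀ j, ‖z j‖ = 1 := by
    intro z hz
    have h0 : ∀ i, ‖z (Sum.inl i)‖ = 1 := fun i => by
      rw [← hz (Sum.inl i)]; simp [τ, hc]
    rintro (i | i)
    · exact h0 i
    · rw [← hz (Sum.inr i)]; simp [τ, h0]
  obtain ⟨z, hz1, j, hj, r, hr, heq⟩ := exists_deformation_end_eq_target hp
    (fun j => hU'o (e j)) (by rw [← hU'c]; exact e.surjective.iUnion_comp U') hhc
    (fun j q hq t => by rw [hh j q hq]; exact hd0 _ _ _) (by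
      intro j z hz hq
      have hzj := norm_pos_iff.2 (hz j)
      rw [hh j _ hq]
      rcases j with i | i
      · refine ⟨((i.succ : ℕ) : ℝ)⁻¹ * ‖z (Sum.inl i)‖⁻¹, by rw [Fin.val_succ]; positivity, ?_⟩
        simp only [d, hγ0, p]
        rw [hext _ (hxi z hz)]
        simp [xf, orbitAroundFirst, mul_smul]
      · refine ⟨((i.succ.succ : ℕ) : ℝ)⁻¹ * ‖z (Sum.inr i)‖⁻¹,
          by rw [Fin.val_succ]; positivity, ?_⟩
        simp only [d, sub_zero, hγ1, p]
        rw [hext _ (hyi z hz)]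
        simp [yf, orbitAroundSecond, mul_smul]) hτc hτ1 hτn
  have hz0 : ∀ j, z j ≠ 0 := fun j => norm_ne_zero_iff.1 (by rw [hz1 j]; exact one_ne_zero)
  rw [hh j _ hj] at heq
  rcases j with i | i
  · simp only [d, hγ1, p, τ] at heq
    rw [hext _ (hyi z hz0), smul_neg] at heq
    revert heq
    refine Fin.cases ?_ (fun i => ?_) i
    · intro heq
      have h1 : (1 + r) • c = 0 := by
        have : c = -(r • c) := by simpa [yf, orbitAroundSecond] using heq
        rw [add_smul, one_smul, eq_neg_iff_add_eq_zero.1 this]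
      rcases smul_eq_zero.1 h1 with h | h
      · linarith
      · exact hc0 h
    · intro heq
      refine add_inv_natCast_smul_ne_neg_smul hc (hz1 (Sum.inr i)) i hr ?_
      simpa [yf, orbitAroundSecond, hz1, add_assoc, one_add_one_eq_two] using heq
  · simp only [d, sub_self, hγ0, p, τ] at heq
    rw [hext _ (hxi z hz0)] at heq
    have hcz : ‖-z (Sum.inl 0)‖ = 1 := by rw [norm_neg, hz1]
    refine add_inv_natCast_smul_ne_neg_smul hcz (hz1 (Sum.inl i.succ)) i hr ?_
    rw [neg_add_eq_sub, smul_neg, neg_neg]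
    simpa [xf, orbitAroundFirst, hz1, add_assoc, one_add_one_eq_two, orbitAroundFirst_one]
      using heq

end LowerBound

section UpperBound

theorem HasMotionPlanningSection.mono {X : Type*} [TopologicalSpace X] {U V : Set (X × X)}
    (hV : HasMotionPlanningSection X V) (h : U ⊆ V) : HasMotionPlanningSection X U := by
  obtain ⟨s, hs⟩ := hV
  exact ⟨s.comp (ContinuousMap.inclusion h), fun p => hs (Set.inclusion h p)⟩

/-- Motion planning sections over disjoint open sets can be glued. -/
theorem HasMotionPlanningSection.iUnion {X ι : Type*} [TopologicalSpace X] {O : ι → Set (X × X)}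
    (hO : ∀ i, IsOpen (O i)) (hd : Pairwise (Function.onFun Disjoint O))
    (h : ∀ i, HasMotionPlanningSection X (O i)) : HasMotionPlanningSection X (⋃ i, O i) := by
  choose s hs using h
  let S : ι → Set (⋃ i, O i : Set (X × X)) := fun i => Subtype.val ⁻¹' O i
  let φ : ∀ i, C(S i, PathSpace X) := fun i =>
    (s i).comp ⟨fun q => ⟨q.1.1, q.2⟩,
      (continuous_subtype_val.comp continuous_subtype_val).subtype_mk _⟩
  have hφ : ∀ i j x (hi : x ∈ S i) (hj : x ∈ S j), φ i ⟨x, hi⟩ = φ j ⟨x, hj⟩ := by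
    intro i j x hi hj
    obtain rfl : i = j := hd.eq (Set.not_disjoint_iff.2 ⟨x.1, hi, hj⟩)
    rfl
  have hS : ∀ x, ∃ i, S i ∈ nhds x := fun x => by
    obtain ⟨i, hi⟩ := Set.mem_iUnion.1 x.2
    exact ⟨i, ((hO i).preimage continuous_subtype_val).mem_nhds hi⟩
  refine ⟨ContinuousMap.liftCover S φ hφ hS, fun p => ?_⟩
  obtain ⟨i, hi⟩ := Set.mem_iUnion.1 p.2
  have : ContinuousMap.liftCover S φ hφ hS p = φ i ⟨p, hi⟩ :=
    ContinuousMap.liftCover_coe (i := i) ⟨p, hi⟩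
  rw [this]
  exact hs i ⟨p.1, hi⟩

/-- Let a space be stratified by a labelling `f` of its pairs of points, and suppose that every
stratum has an open neighbourhood with a motion planning section which does not meet the other
strata of the same level. Then the number of levels bounds the size of an open cover. -/
theorem hasTCCover_of_stratification {X ι : Type*} [PseudoMetricSpace X] [Finite ι] {k : ℕ}
    (f : X × X → ι) (V : ι → Set (X × X)) (level : ι → ℕ) (hV : ∀ i, IsOpen (V i))
    (hfV : ∀ z, z ∈ V (f z)) (hsec : ∀ z, HasMotionPlanningSection X (V (f z)))
    (hlevel : ∀ z, level (f z) < k)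
    (hsep : ∀ z w, z ∈ V (f w) → level (f z) = level (f w) → f z = f w) : HasTCCover X k := by
  let O : ι → Set (X × X) := fun i => V i ∩
    {z | ∀ j, j ≠ i → level j = level i →
      Metric.infEDist z (f ⁻¹' {i}) < Metric.infEDist z (f ⁻¹' {j})}
  have hO : ∀ i, IsOpen (O i) := by
    intro i
    refine (hV i).inter ?_
    simp only [Set.ofPred_forall]
    exact isOpen_iInter_of_finite fun j => isOpen_iInter_of_finite fun _ =>
      isOpen_iInter_of_finite fun _ =>
        isOpen_lt Metric.continuous_infEDist Metric.continuous_infEDist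
  have hfO : ∀ z, z ∈ O (f z) := by
    refine fun z => ⟨hfV z, fun j hj hl => ?_⟩
    rw [Metric.infEDist_zero_of_mem (by exact rfl), Metric.infEDist_pos_iff_notMem_closure,
      mem_closure_iff]
    intro hcl
    obtain ⟨w, hw, rfl⟩ := hcl _ (hV (f z)) (hfV z)
    exact hj (hsep w z hw hl)
  refine ⟨fun l => ⋃ i : {i // i ∈ Set.range f ∧ level i = l}, O i, fun l =>
    isOpen_iUnion fun i => hO i, ?_, fun l => ?_⟩
  · refine Set.eq_univ_of_forall fun z => Set.mem_iUnion.2 ⟨⟨level (f z), hlevel z⟩, ?_⟩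
    exact Set.mem_iUnion.2 ⟨⟨f z, ⟨z, rfl⟩, rfl⟩, hfO z⟩
  · refine HasMotionPlanningSection.iUnion (fun i => hO i) (fun i j hij => ?_) ?_
    · rw [Function.onFun, Set.disjoint_left]
      intro z hi hj
      have hne : i.1 ≠ j.1 := fun h => hij (Subtype.ext h)
      exact lt_asymm (hi.2 j hne.symm (j.2.2.trans i.2.2.symm))
        (hj.2 i hne (i.2.2.trans j.2.2.symm))
    · rintro ⟨_, ⟨z, rfl⟩, _⟩
      exact (hsec z).mono Set.inter_subset_left

/-- A continuous family of paths from the points of `V` to a base point. -/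
def ContractsIn {X : Type*} [TopologicalSpace X] (V : Set X) (a : X) : Prop :=
  ∃ γ : ∀ x : V, Path x.1 a, Continuous fun q : V × unitInterval => γ q.1 q.2

theorem ContractsIn.hasMotionPlanningSection {X : Type*} [TopologicalSpace X] {V W : Set X} {a : X}
    (hV : ContractsIn V a) (hW : ContractsIn W a) : HasMotionPlanningSection X (V ×ˢ W) := by
  obtain ⟨γ, hγ⟩ := hV
  obtain ⟨δ, hδ⟩ := hW
  let Y : Type _ := (V ×ˢ W : Set (X × X))
  let γ' : ∀ p : Y, Path p.1.1 a := fun p => γ ⟨p.1.1, p.2.1⟩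
  let δ' : ∀ p : Y, Path p.1.2 a := fun p => δ ⟨p.1.2, p.2.2⟩
  have hγ' : Continuous fun q : Y × unitInterval => γ' q.1 q.2 :=
    hγ.comp (((continuous_fst.comp (continuous_subtype_val.comp continuous_fst)).subtype_mk
      _).prodMk continuous_snd)
  have hδ' : Continuous fun q : Y × unitInterval => δ' q.1 q.2 :=
    hδ.comp (((continuous_snd.comp (continuous_subtype_val.comp continuous_fst)).subtype_mk
      _).prodMk continuous_snd)
  have h := Path.trans_continuous_family γ' hγ' _ (Path.symm_continuous_family δ' hδ')
  exact ⟨ContinuousMap.curry ⟨_, h⟩, fun p =>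
    ⟨((γ' p).trans (δ' p).symm).source, ((γ' p).trans (δ' p).symm).target⟩⟩

/-- Two continuous families of configurations are joined by a continuous family of paths if the
segments between them consist of configurations. -/
theorem exists_segment_family {Y : Type*} [TopologicalSpace Y] {n m : ℕ} {f g : Y → ConfSpace n m}
    (hf : Continuous f) (hg : Continuous g)
    (h : ∀ y (t : ℝ), 0 < t → t < 1 → Function.Injective ((1 - t) • (f y).1 + t • (g y).1)) :
    ∃ γ : ∀ y, Path (f y) (g y), Continuous fun q : Y × unitInterval => γ q.1 q.2 := by
  have hinj : ∀ y (t : unitInterval),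
      Function.Injective ((1 - t : ℝ) • (f y).1 + (t : ℝ) • (g y).1) := by
    intro y t
    rcases t.2.1.eq_or_lt with h0 | h0
    · rw [← h0]; simpa using (f y).2
    rcases t.2.2.eq_or_lt with h1 | h1
    · rw [h1]; simpa using (g y).2
    exact h y t h0 h1
  have hc : Continuous fun q : Y × unitInterval =>
      (⟨(1 - q.2 : ℝ) • (f q.1).1 + (q.2 : ℝ) • (g q.1).1, hinj q.1 q.2⟩ : ConfSpace n m) :=
    Continuous.subtype_mk (by fun_prop) _
  exact ⟨fun y => ⟨⟨fun t => ⟨_, hinj y t⟩, hc.comp (Continuous.prodMk_right y)⟩,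
    Subtype.ext (by simp), Subtype.ext (by simp)⟩, hc⟩

/-- The order on the points of a configuration in which two points are comparable if they differ
only in the coordinate `o`. -/
def verticalOrder {n m : ℕ} (o : Fin m) (x : Fin n → Fin m → ℝ) (i j : Fin n) : Prop :=
  (∀ k ≠ o, x i k = x j k) ∧ x i o < x j o

/-- The configurations whose vertical order is contained in `R`, in a way that is stable under
small perturbations. -/
def verticalNhd {n m : ℕ} (o : Fin m) (R : Fin n → Fin n → Prop) : Set (ConfSpace n m) :=
  {x | ∀ i j, (R i j → x.1 i o < x.1 j o) ∧
    (i ≠ j → ¬ R i j → ¬ R j i → ∃ k ≠ o, x.1 i k ≠ x.1 j k)}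

theorem isOpen_verticalNhd {n m : ℕ} (o : Fin m) (R : Fin n → Fin n → Prop) :
    IsOpen (verticalNhd o R) := by
  have hc : ∀ i k, Continuous fun x : ConfSpace n m => x.1 i k := fun i k =>
    (continuous_apply k).comp ((continuous_apply i).comp continuous_subtype_val)
  simp only [verticalNhd, Set.ofPred_forall, Set.ofPred_and, Set.ofPred_exists]
  refine isOpen_iInter_of_finite fun i => isOpen_iInter_of_finite fun j => IsOpen.inter ?_ ?_
  · exact isOpen_iInter_of_finite fun _ => isOpen_lt (hc i o) (hc j o)
  · refine isOpen_iInter_of_finite fun _ => isOpen_iInter_of_finite fun _ =>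
      isOpen_iInter_of_finite fun _ => isOpen_iUnion fun k => IsOpen.inter
        (isOpen_iInter_of_finite fun _ => isOpen_const) (isOpen_ne_fun (hc i k) (hc j k))

theorem verticalOrder_trichotomous {n m : ℕ} (o : Fin m) {x : Fin n → Fin m → ℝ}
    (hx : Function.Injective x) {i j : Fin n} (hij : i ≠ j) (h : ∀ k ≠ o, x i k = x j k) :
    verticalOrder o x i j ∨ verticalOrder o x j i := by
  have hne : x i o ≠ x j o := fun ho => hij (hx (funext fun k => by
    by_cases hk : k = o
    · rw [hk, ho]
    · exact h k hk))
  exact hne.lt_or_gt.imp (fun hl => ⟨h, hl⟩) fun hl => ⟨fun k hk => (h k hk).symm, hl⟩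

theorem mem_verticalNhd_verticalOrder {n m : ℕ} (o : Fin m) (x : ConfSpace n m) :
    x ∈ verticalNhd o (verticalOrder o x.1) := by
  refine fun i j => ⟨And.right, fun hij h1 h2 => ?_⟩
  by_contra! h
  exact (verticalOrder_trichotomous o x.2 hij h).elim h1 h2

theorem verticalOrder_of_mem_verticalNhd {n m : ℕ} {o : Fin m} {R : Fin n → Fin n → Prop}
    {x : ConfSpace n m} (hx : x ∈ verticalNhd o R) {i j : Fin n} (h : verticalOrder o x.1 i j) :
    R i j := by
  by_contra hR
  obtain ⟨k, hk, hne⟩ := (hx i j).2 (fun hij => by subst hij; exact lt_irrefl _ h.2) hR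
    fun hji => lt_asymm h.2 ((hx j i).1 hji)
  exact hne (h.1 k hk)

open Classical in
/-- The minimal elements of a relation. -/
noncomputable def minimalElements {n : ℕ} (R : Fin n → Fin n → Prop) : Finset (Fin n) :=
  {j | ∀ i, ¬ R i j}

theorem mem_minimalElements {n : ℕ} {R : Fin n → Fin n → Prop} {j : Fin n} :
    j ∈ minimalElements R ↔ ∀ i, ¬ R i j := by
  simp [minimalElements]

theorem minimalElements_anti {n : ℕ} {R S : Fin n → Fin n → Prop} (h : ∀ i j, R i j → S i j) :
    minimalElements S ⊆ minimalElements R := fun j hj =>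
  mem_minimalElements.2 fun i hR => mem_minimalElements.1 hj i (h i j hR)

theorem exists_mem_minimalElements_verticalOrder {n m : ℕ} (o : Fin m) (x : Fin n → Fin m → ℝ)
    (i : Fin n) :
    ∃ j ∈ minimalElements (verticalOrder o x), ∀ k ≠ o, x j k = x i k := by
  classical
  obtain ⟨j, hj, hmin⟩ := Finset.exists_min_image {j | ∀ k ≠ o, x j k = x i k} (fun j => x j o)
    ⟨i, by simp⟩
  have hj' : ∀ k ≠ o, x j k = x i k := by simpa using hj
  refine ⟨j, mem_minimalElements.2 fun l hl => ?_, hj'⟩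
  exact (hmin l (by simpa using fun k hk => (hl.1 k hk).trans (hj' k hk))).not_gt hl.2

/-- A vertical order which is contained in another one and has as few minimal elements is equal
to it. -/
theorem verticalOrder_eq_of_le {n m : ℕ} {o : Fin m} {x y : Fin n → Fin m → ℝ}
    (hx : Function.Injective x) (hy : Function.Injective y)
    (h : ∀ i j, verticalOrder o x i j → verticalOrder o y i j)
    (hcard : (minimalElements (verticalOrder o x)).card ≤
      (minimalElements (verticalOrder o y)).card) :
    verticalOrder o x = verticalOrder o y := by
  have hmin := Finset.eq_of_subset_of_card_le (minimalElements_anti h) hcard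
  have hproj : ∀ i j, (∀ k ≠ o, x i k = x j k) → ∀ k ≠ o, y i k = y j k := by
    intro i j hij k hk
    rcases eq_or_ne i j with rfl | hne
    · rfl
    · rcases verticalOrder_trichotomous o hx hne hij with hl | hl
      · exact (h _ _ hl).1 k hk
      · exact ((h _ _ hl).1 k hk).symm
  funext i j
  refine propext ⟨h i j, fun hij => ?_⟩
  obtain ⟨a, ha, hai⟩ := exists_mem_minimalElements_verticalOrder o x i
  obtain ⟨b, hb, hbj⟩ := exists_mem_minimalElements_verticalOrder o x j
  rw [← hmin, mem_minimalElements] at ha hb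
  have hab : a = b := by
    by_contra hne
    refine (verticalOrder_trichotomous o hy hne fun k hk => ?_).elim (hb a) (ha b)
    rw [hproj a i hai k hk, hproj b j hbj k hk, hij.1 k hk]
  subst hab
  have hne : i ≠ j := fun e => by subst e; exact lt_irrefl _ hij.2
  refine (verticalOrder_trichotomous o hx hne fun k hk =>
    (hai k hk).symm.trans (hbj k hk)).resolve_right fun hji => ?_
  exact lt_asymm hij.2 (h j i hji).2

/-- A real function on a finite type can be perturbed to an injective one. -/
theorem exists_injective_monotone {n : ℕ} (f : Fin n → ℝ) :
    ∃ H : Fin n → ℝ, Function.Injective H ∧ ∀ i j, f i < f j → H i < H j := by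
  classical
  let g : Fin n → ℝ ×ₗ Fin n := fun i => toLex (f i, i)
  let H : Fin n → ℝ := fun i => (({k | g k < g i} : Finset (Fin n)).card : ℝ)
  have hg : ∀ i j, g i < g j → H i < H j := by
    intro i j hij
    refine Nat.cast_lt.2 (Finset.card_lt_card (Finset.ssubset_iff_of_subset (fun k hk => ?_) |>.2
      ⟨i, by simpa using hij, by simp⟩))
    simp only [Finset.mem_filter, Finset.mem_univ, true_and] at hk ⊢
    exact hk.trans hij
  refine ⟨H, fun i j hij => ?_, fun i j hij => hg i j (Prod.Lex.toLex_lt_toLex.2 (Or.inl hij))⟩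
  rcases lt_trichotomy (g i) (g j) with h | h | h
  · exact absurd hij (hg i j h).ne
  · exact congrArg Prod.snd (toLex.injective h)
  · exact absurd hij (hg j i h).ne'

/-- The points of a line spread along the coordinate `q`. -/
def lineConfig (n : ℕ) {m : ℕ} (q : Fin m) : ConfSpace n m :=
  ⟨fun i => Pi.single q ((i : ℕ) : ℝ), fun i j h => by
    have := congrFun h q
    simpa [Fin.ext_iff] using this⟩

theorem contractsIn_verticalNhd {n m : ℕ} {o q : Fin m} (hqo : q ≠ o) (y : ConfSpace n m) :
    ContractsIn (verticalNhd o (verticalOrder o y.1)) (lineConfig n q) := by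
  obtain ⟨H, hH, hyH⟩ := exists_injective_monotone fun i => y.1 i o
  set V := verticalNhd o (verticalOrder o y.1)
  have hinj : ∀ x : V, Function.Injective fun i => Function.update (x.1.1 i) o (H i) := by
    intro x i j hij
    have := congrFun hij o
    simp only [Function.update_self] at this
    exact hH this
  let g : V → ConfSpace n m := fun x => ⟨_, hinj x⟩
  have hg : Continuous g := Continuous.subtype_mk (continuous_pi fun i =>
    (((continuous_apply i).comp continuous_subtype_val).comp continuous_subtype_val).update o
      continuous_const) _
  obtain ⟨γ, hγ⟩ := exists_segment_family (f := fun x : V => x.1) continuous_subtype_val hg (by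
    intro x t ht0 ht1 i j hij
    by_contra hne
    have key : ∀ i j, verticalOrder o y.1 i j →
        (1 - t) * x.1.1 i o + t * H i < (1 - t) * x.1.1 j o + t * H j := fun i j h =>
      add_lt_add (mul_lt_mul_of_pos_left ((x.2 i j).1 h) (sub_pos.2 ht1))
        (mul_lt_mul_of_pos_left (hyH i j h.2) ht0)
    have ho : (1 - t) * x.1.1 i o + t * H i = (1 - t) * x.1.1 j o + t * H j := by
      simpa [g] using congrFun hij o
    obtain ⟨k, hk, hxk⟩ := (x.2 i j).2 hne (fun h => (key i j h).ne ho)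
      fun h => (key j i h).ne' ho
    refine hxk ?_
    have := congrFun hij k
    simp only [g, Pi.add_apply, Pi.smul_apply, smul_eq_mul, Function.update_of_ne hk] at this
    linarith)
  obtain ⟨δ, hδ⟩ := exists_segment_family (g := fun _ : V => lineConfig n q) hg continuous_const (by
    intro x t ht0 ht1 i j hij
    have := congrFun hij o
    simp only [g, lineConfig, Pi.add_apply, Pi.smul_apply, smul_eq_mul, Function.update_self,
      Pi.single_eq_of_ne hqo.symm, mul_zero, add_zero] at this
    exact hH (mul_left_cancel₀ (sub_pos.2 ht1).ne' this))
  exact ⟨fun x => (γ x).trans (δ x), Path.trans_continuous_family γ hγ δ hδ⟩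

theorem hasTCCover_confSpace {n m : ℕ} (hn : 0 < n) (hm : 2 ≤ m) :
    HasTCCover (ConfSpace n m) (2 * n - 1) := by
  let o : Fin m := ⟨0, by omega⟩
  let q : Fin m := ⟨1, by omega⟩
  have hqo : q ≠ o := by simp [q, o]
  let r : ConfSpace n m → Fin n → Fin n → Prop := fun x => verticalOrder o x.1
  let c : (Fin n → Fin n → Prop) → ℕ := fun R => (minimalElements R).card
  have hc1 : ∀ x, 1 ≤ c (r x) := fun x => by
    obtain ⟨j, hj, -⟩ := exists_mem_minimalElements_verticalOrder o x.1 ⟨0, hn⟩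
    exact Finset.card_pos.2 ⟨j, hj⟩
  have hcn : ∀ R, c R ≤ n := fun R => (Finset.card_le_univ _).trans_eq (Fintype.card_fin n)
  refine hasTCCover_of_stratification (fun z => (r z.1, r z.2))
    (fun i => verticalNhd o i.1 ×ˢ verticalNhd o i.2) (fun i => c i.1 + c i.2 - 2)
    (fun i => (isOpen_verticalNhd o _).prod (isOpen_verticalNhd o _))
    (fun z => ⟨mem_verticalNhd_verticalOrder o _, mem_verticalNhd_verticalOrder o _⟩)
    (fun z => (contractsIn_verticalNhd hqo z.1).hasMotionPlanningSection
      (contractsIn_verticalNhd hqo z.2)) (fun z => ?_) fun z w hzw hl => ?_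
  · have := hcn (r z.1)
    have := hcn (r z.2)
    dsimp only
    omega
  · have key : ∀ x y : ConfSpace n m, x ∈ verticalNhd o (r y) →
        c (r y) ≤ c (r x) ∧ (c (r x) ≤ c (r y) → r x = r y) := fun x y hxy =>
      ⟨Finset.card_le_card (minimalElements_anti fun i j => verticalOrder_of_mem_verticalNhd hxy),
        verticalOrder_eq_of_le x.2 y.2 fun i j => verticalOrder_of_mem_verticalNhd hxy⟩
    obtain ⟨h1, h1'⟩ := key z.1 w.1 hzw.1
    obtain ⟨h2, h2'⟩ := key z.2 w.2 hzw.2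
    have := hc1 z.1
    have := hc1 z.2
    have := hc1 w.1
    have := hc1 w.2
    dsimp only at hl
    exact Prod.ext (h1' (by omega)) (h2' (by omega))

end UpperBound

theorem HasTCCover.mono {X : Type*} [TopologicalSpace X] {k l : ℕ} (h : HasTCCover X k)
    (hkl : k ≤ l) : HasTCCover X l := by
  obtain ⟨U, hU, hc, hs⟩ := h
  refine ⟨fun i => if hi : (i : ℕ) < k then U ⟨i, hi⟩ else ∅, fun i => ?_, ?_, fun i => ?_⟩
  · dsimp only
    split_ifs
    exacts [hU _, isOpen_empty]
  · refine Set.eq_univ_of_forall fun z => ?_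
    obtain ⟨i, hi⟩ := Set.mem_iUnion.1 (hc.symm ▸ Set.mem_univ z)
    exact Set.mem_iUnion.2 ⟨Fin.castLE hkl i, by simpa using hi⟩
  · dsimp only
    split_ifs with hi
    · exact hs _
    · exact ⟨⟨fun p => p.2.elim, continuous_of_const fun p => p.2.elim⟩, fun p => p.2.elim⟩

theorem topComplexity_eq {X : Type*} [TopologicalSpace X] {k : ℕ} (h : HasTCCover X (k + 1))
    (h' : ¬ HasTCCover X k) : TopComplexity X = (k + 1 : ℕ) := by
  refine IsLeast.csInf_eq ⟨⟨k + 1, rfl, h⟩, ?_⟩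
  rintro _ ⟨l, rfl, hl⟩
  exact Nat.cast_le.2 (not_lt.1 fun hlt => h' (hl.mono (Nat.lt_succ_iff.1 hlt)))

/-- for every even `m ≥ 2` and `n ≥ 2`, the topological complexity of
`C_n(ℝ^m)` equals either `2n - 2` or `2n - 1`. -/
theorem tc_config_space_even (m n : ℕ) (hm : Even m) (hm2 : 2 ≤ m) (hn : 2 ≤ n) :
    TopComplexity (ConfSpace n m) = (2 * n - 2 : ℕ) ∨
      TopComplexity (ConfSpace n m) = (2 * n - 1 : ℕ) := by
  obtain ⟨k, rfl⟩ := Nat.exists_eq_add_of_le' hn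
  have hlow := not_hasTCCover_confSpace (k := k) (m := m) (by omega)
  have hupp : HasTCCover (ConfSpace (k + 2) m) (2 * (k + 2) - 1) :=
    hasTCCover_confSpace (by omega) hm2
  have h1 : 2 * (k + 2) - 1 = 2 * k + 2 + 1 := by omega
  have h2 : 2 * (k + 2) - 2 = 2 * k + 1 + 1 := by omega
  rw [h1] at hupp ⊢
  rw [h2]
  by_cases h : HasTCCover (ConfSpace (k + 2) m) (2 * k + 1 + 1)
  · exact Or.inl (topComplexity_eq h hlow)
  · exact Or.inr (topComplexity_eq hupp h)
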